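/- arXiv:1909.08345 — 4 statements merged into one kernel-verified Lean document; each statement's English description precedes it below -/
import Mathlib

section
/- Let E and A be n×n real matrices. The pair (E, A) is regular and impulse-free if and only if the (2n)×(2n) block matrix [[E, 0], [A, E]] has rank equal to n + rank(E). -/
open Polynomial

/-- The pencil polynomial `p(X) = det(X·E − A)` of the pair `(E, A)`. -/
noncomputable def pencil {n : Type*} [Fintype n] [DecidableEq n]
    (E A : Matrix n n ℝ) : Polynomial ℝ :=
  (Matrix.of fun i j => Polynomial.X * Polynomial.C (E i j) - Polynomial.C (A i j)).det

/-- The pair `(E, A)` is regular: the pencil polynomial is not identically zero. -/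
def RegularPair {n : Type*} [Fintype n] [DecidableEq n] (E A : Matrix n n ℝ) : Prop :=
  pencil E A ≠ 0

/-- The pair `(E, A)` is impulse-free: the pencil polynomial is nonzero and its degree
equals `rank E`. -/
def ImpulseFreePair {n : Type*} [Fintype n] [DecidableEq n] (E A : Matrix n n ℝ) : Prop :=
  pencil E A ≠ 0 ∧ (pencil E A).natDegree = E.rank

/-!
Choose bases in which `E = [[1, 0], [0, 0]]` and let `S` be the lower right block of `A` in these
bases. The last columns of `X·E − A` are constant, so `det (X·E − A)` has degree at most `rank E`,
and its coefficient in that degree is `det (-S)`. On the other side, the rank of `[[E, 0], [A, E]]`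
falls short of `n + rank E` by the dimension of `{x ∈ ker E | A x ∈ range E}`, which is `ker S`.
Both conditions therefore say that `S` is invertible.
-/

open Matrix
open LinearMap (ker range)
open Module (finrank)

theorem ne_zero_and_natDegree_eq_iff_coeff_ne_zero {R : Type*} [Semiring R] {p : R[X]} {r : ℕ}
    (h : p.natDegree ≤ r) :
    (p ≠ 0 ∧ p.natDegree = r) ↔ p.coeff r ≠ 0 := by
  refine ⟨?_, fun hr => ⟨?_, natDegree_eq_of_le_of_coeff_ne_zero h hr⟩⟩
  · rintro ⟨hp, rfl⟩
    exact leadingCoeff_ne_zero.mpr hp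
  · rintro rfl
    exact hr (coeff_zero r)

section ColumnDegree

variable {ι R : Type*}

theorem coeff_prod_sum_of_natDegree_le [CommSemiring R] (s : Finset ι) (f : ι → R[X]) (d : ι → ℕ)
    (h : ∀ i ∈ s, (f i).natDegree ≤ d i) :
    (∏ i ∈ s, f i).coeff (∑ i ∈ s, d i) = ∏ i ∈ s, (f i).coeff (d i) := by
  classical
  induction s using Finset.induction_on with
  | empty => simp
  | insert a s ha ih =>
    have hs : ∀ i ∈ s, (f i).natDegree ≤ d i := fun i hi => h i (Finset.mem_insert_of_mem hi)
    rw [Finset.prod_insert ha, Finset.sum_insert ha, Finset.prod_insert ha,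
      coeff_mul_add_eq_of_natDegree_le (h a (Finset.mem_insert_self a s))
        ((natDegree_prod_le s f).trans (Finset.sum_le_sum hs)), ih hs]

variable [CommRing R] [Fintype ι] [DecidableEq ι] {M : Matrix ι ι R[X]} {d : ι → ℕ}

theorem natDegree_det_le_sum (h : ∀ i j, (M i j).natDegree ≤ d j) :
    M.det.natDegree ≤ ∑ j, d j := by
  rw [det_apply]
  refine natDegree_sum_le_of_forall_le _ _ fun σ _ => (natDegree_smul_le _ _).trans ?_
  exact (natDegree_prod_le _ _).trans (Finset.sum_le_sum fun j _ => h (σ j) j)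

theorem coeff_det_sum_of_natDegree_le (h : ∀ i j, (M i j).natDegree ≤ d j) :
    M.det.coeff (∑ j, d j) = (of fun i j => (M i j).coeff (d j)).det := by
  simp only [det_apply, finsetSum_coeff, coeff_smul, of_apply]
  refine Finset.sum_congr rfl fun σ _ => ?_
  rw [coeff_prod_sum_of_natDegree_le _ _ _ fun j _ => h (σ j) j]

end ColumnDegree

section Pencil

variable {n ι κ R : Type*} [CommRing R]

/-- The matrix pencil `X·E − A` as a matrix of polynomials, over an arbitrary commutative ring. -/
noncomputable def pencilMatrix (E A : Matrix n n R) : Matrix n n R[X] :=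
  (X : R[X]) • E.map C - A.map C

theorem natDegree_pencilMatrix_fromBlocks_le (E₁₁ : Matrix ι ι R) (E₂₁ : Matrix κ ι R)
    (A : Matrix (ι ⊕ κ) (ι ⊕ κ) R) (i j : ι ⊕ κ) :
    (pencilMatrix (fromBlocks E₁₁ 0 E₂₁ 0) A i j).natDegree ≤ Sum.elim (1 : ι → ℕ) 0 j := by
  rcases j with j | j
  · simp only [pencilMatrix, Matrix.sub_apply, Matrix.smul_apply, map_apply, smul_eq_mul,
      Sum.elim_inl, Pi.one_apply]
    compute_degree
  · rcases i with i | i <;> simp [pencilMatrix]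

variable [Fintype n] [DecidableEq n] [Fintype ι] [DecidableEq ι] [Fintype κ] [DecidableEq κ]

theorem det_pencilMatrix_mul_mul (V U E A : Matrix n n R) :
    (pencilMatrix (V * E * U) (V * A * U)).det =
      C V.det * (pencilMatrix E A).det * C U.det := by
  have hfactor : pencilMatrix (V * E * U) (V * A * U) =
      C.mapMatrix V * pencilMatrix E A * C.mapMatrix U := by
    simp only [pencilMatrix, RingHom.mapMatrix_apply, Matrix.map_mul, mul_sub, sub_mul,
      mul_smul_comm, smul_mul_assoc]
  rw [hfactor, det_mul, det_mul, RingHom.map_det, RingHom.map_det]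

theorem det_pencilMatrix_submatrix_equiv (e : n ≃ ι) (E A : Matrix ι ι R) :
    (pencilMatrix (E.submatrix e e) (A.submatrix e e)).det = (pencilMatrix E A).det :=
  det_submatrix_equiv_self e (pencilMatrix E A)

variable (E₁₁ : Matrix ι ι R) (E₂₁ : Matrix κ ι R) (A : Matrix (ι ⊕ κ) (ι ⊕ κ) R)

theorem natDegree_det_pencilMatrix_fromBlocks_le :
    (pencilMatrix (fromBlocks E₁₁ 0 E₂₁ 0) A).det.natDegree ≤ Fintype.card ι := by
  simpa using natDegree_det_le_sum (natDegree_pencilMatrix_fromBlocks_le E₁₁ E₂₁ A)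

theorem coeff_card_det_pencilMatrix_fromBlocks :
    (pencilMatrix (fromBlocks E₁₁ 0 E₂₁ 0) A).det.coeff (Fintype.card ι) =
      (fromBlocks E₁₁ (-A.toBlocks₁₂) E₂₁ (-A.toBlocks₂₂)).det := by
  have hsum : Fintype.card ι = ∑ j : ι ⊕ κ, Sum.elim (1 : ι → ℕ) 0 j := by simp
  rw [hsum, coeff_det_sum_of_natDegree_le (natDegree_pencilMatrix_fromBlocks_le E₁₁ E₂₁ A)]
  congr 1
  ext (i | i) (j | j) <;> simp [pencilMatrix, toBlocks₁₂, toBlocks₂₂, coeff_C]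

end Pencil

section BlockRank

variable {k l m n R K : Type*} [Fintype k] [Fintype n] [CommRing R] [Field K]

theorem mem_ker_fromBlocks_zero₁₂ {E : Matrix m n R} {A : Matrix l n R} {F : Matrix l k R}
    {v : n ⊕ k → R} :
    v ∈ ker (fromBlocks E 0 A F).mulVecLin ↔
      E *ᵥ (v ∘ Sum.inl) = 0 ∧ A *ᵥ (v ∘ Sum.inl) + F *ᵥ (v ∘ Sum.inr) = 0 := by
  rw [LinearMap.mem_ker, mulVecLin_apply, fromBlocks_mulVec, zero_mulVec, add_zero,
    ← Sum.elim_zero_zero, Sum.elim_eq_iff]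

theorem map_funLeft_inl_ker_fromBlocks_zero₁₂ (E : Matrix m n R) (A : Matrix l n R)
    (F : Matrix l k R) :
    (ker (fromBlocks E 0 A F).mulVecLin).map (LinearMap.funLeft R R Sum.inl) =
      ker E.mulVecLin ⊓ (range F.mulVecLin).comap A.mulVecLin := by
  ext x
  constructor
  · rintro ⟨v, hv, rfl⟩
    obtain ⟨hE, hAF⟩ := mem_ker_fromBlocks_zero₁₂.mp hv
    refine ⟨hE, -(v ∘ Sum.inr), ?_⟩
    rw [mulVecLin_apply, mulVec_neg]
    exact (eq_neg_of_add_eq_zero_left hAF).symm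
  · rintro ⟨hE, y, hy : F *ᵥ y = A *ᵥ x⟩
    refine ⟨Sum.elim x (-y), mem_ker_fromBlocks_zero₁₂.mpr ⟨hE, ?_⟩, rfl⟩
    simp [mulVec_neg, hy]

theorem finrank_ker_fromBlocks_zero₁₂ (E : Matrix m n K) (A : Matrix l n K) (F : Matrix l k K) :
    finrank K (ker (fromBlocks E 0 A F).mulVecLin) =
      finrank K ↥(ker E.mulVecLin ⊓ (range F.mulVecLin).comap A.mulVecLin) +
        finrank K (ker F.mulVecLin) := by
  let proj := (LinearMap.funLeft K K Sum.inl).domRestrict (ker (fromBlocks E 0 A F).mulVecLin)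
  let kerEquiv : ker proj ≃ₗ[K] ker F.mulVecLin :=
    { toFun := fun v => ⟨v.1.1 ∘ Sum.inr, by
        have hv : v.1.1 ∘ Sum.inl = 0 := v.2
        simpa [hv] using (mem_ker_fromBlocks_zero₁₂.mp v.1.2).2⟩
      map_add' := fun _ _ => rfl
      map_smul' := fun _ _ => rfl
      invFun := fun y => ⟨⟨Sum.elim 0 y, mem_ker_fromBlocks_zero₁₂.mpr (by
        have hy : F *ᵥ y = 0 := y.2
        simp [hy])⟩, rfl⟩
      left_inv := fun v => by
        have hv : v.1.1 ∘ Sum.inl = 0 := v.2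
        ext (i | i)
        · exact (congrFun hv i).symm
        · rfl
      right_inv := fun _ => rfl }
  rw [← map_funLeft_inl_ker_fromBlocks_zero₁₂, ← LinearMap.range_domRestrict,
    ← kerEquiv.finrank_eq, LinearMap.finrank_range_add_finrank_ker]

theorem rank_add_finrank_ker (M : Matrix m n K) :
    M.rank + finrank K (ker M.mulVecLin) = Fintype.card n := by
  rw [Matrix.rank, LinearMap.finrank_range_add_finrank_ker, Module.finrank_fintype_fun_eq_card]

theorem rank_fromBlocks_zero₁₂_add_finrank (E : Matrix m n K) (A : Matrix l n K)
    (F : Matrix l k K) :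
    (fromBlocks E 0 A F).rank +
        finrank K ↥(ker E.mulVecLin ⊓ (range F.mulVecLin).comap A.mulVecLin) =
      Fintype.card n + F.rank := by
  have hblock := rank_add_finrank_ker (fromBlocks E 0 A F)
  have hker := finrank_ker_fromBlocks_zero₁₂ E A F
  have hF := rank_add_finrank_ker F
  rw [Fintype.card_sum] at hblock
  omega

theorem rank_fromBlocks_zero₁₂_eq_card_add_rank_iff (E : Matrix m n K) (A : Matrix l n K)
    (F : Matrix l k K) :
    (fromBlocks E 0 A F).rank = Fintype.card n + F.rank ↔
      Disjoint (ker E.mulVecLin) ((range F.mulVecLin).comap A.mulVecLin) := by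
  rw [← rank_fromBlocks_zero₁₂_add_finrank E A F, left_eq_add, Submodule.finrank_eq_zero,
    disjoint_iff]

end BlockRank

theorem rank_fromBlocks_submatrix_equiv {ι n R : Type*} [CommSemiring R] [Fintype ι] [Fintype n]
    (e : n ≃ ι) (E A F : Matrix ι ι R) :
    (fromBlocks (E.submatrix e e) 0 (A.submatrix e e) (F.submatrix e e)).rank =
      (fromBlocks E 0 A F).rank := by
  rw [← rank_submatrix (fromBlocks E 0 A F) (e.sumCongr e) (e.sumCongr e)]
  congr 1
  ext (i | i) (j | j) <;> rfl

theorem rank_fromBlocks_mul_mul {n R : Type*} [CommRing R] [Fintype n] [DecidableEq n]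
    {V U : Matrix n n R} (hV : IsUnit V.det) (hU : IsUnit U.det) (E A F : Matrix n n R) :
    (fromBlocks (V * E * U) 0 (V * A * U) (V * F * U)).rank = (fromBlocks E 0 A F).rank := by
  have hfactor : fromBlocks (V * E * U) 0 (V * A * U) (V * F * U) =
      fromBlocks V 0 0 V * fromBlocks E 0 A F * fromBlocks U 0 0 U := by
    simp [fromBlocks_multiply]
  rw [hfactor, rank_mul_eq_left_of_isUnit_det, rank_mul_eq_right_of_isUnit_det]
  · simpa using hV
  · simpa using hU

section RankNormalForm

variable {ι κ R : Type*} [DecidableEq ι] [CommRing R]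

/-- The block matrix `[[1, 0], [0, 0]]` with identity block indexed by `ι`: the representative of
the matrices of rank `|ι|` up to multiplication by invertible matrices on both sides. -/
def rankNormalForm (ι κ R : Type*) [DecidableEq ι] [Zero R] [One R] : Matrix (ι ⊕ κ) (ι ⊕ κ) R :=
  fromBlocks 1 0 0 0

variable [Fintype ι] [Fintype κ]

theorem mem_ker_rankNormalForm {v : ι ⊕ κ → R} :
    v ∈ ker (rankNormalForm ι κ R).mulVecLin ↔ v ∘ Sum.inl = 0 := by
  rw [LinearMap.mem_ker, mulVecLin_apply, rankNormalForm, fromBlocks_mulVec,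
    ← Sum.elim_zero_zero, Sum.elim_eq_iff]
  simp

theorem mem_range_rankNormalForm {v : ι ⊕ κ → R} :
    v ∈ range (rankNormalForm ι κ R).mulVecLin ↔ v ∘ Sum.inr = 0 := by
  constructor
  · rintro ⟨y, rfl⟩
    simp [rankNormalForm, fromBlocks_mulVec]
  · intro hv
    refine ⟨v, ?_⟩
    rw [← Sum.elim_comp_inl_inr v, hv]
    simp [rankNormalForm, fromBlocks_mulVec]

variable [DecidableEq κ] (A : Matrix (ι ⊕ κ) (ι ⊕ κ) R)

theorem det_pencilMatrix_rankNormalForm_natDegree_eq_iff :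
    ((pencilMatrix (rankNormalForm ι κ R) A).det ≠ 0 ∧
      (pencilMatrix (rankNormalForm ι κ R) A).det.natDegree = Fintype.card ι) ↔
        A.toBlocks₂₂.det ≠ 0 := by
  rw [rankNormalForm,
    ne_zero_and_natDegree_eq_iff_coeff_ne_zero (natDegree_det_pencilMatrix_fromBlocks_le 1 0 A),
    coeff_card_det_pencilMatrix_fromBlocks, det_fromBlocks_zero₂₁, det_one, one_mul, det_neg,
    ne_eq, (isUnit_neg_one.pow _).mul_right_eq_zero]

theorem disjoint_ker_comap_range_rankNormalForm_iff [IsDomain R] :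
    Disjoint (ker (rankNormalForm ι κ R).mulVecLin)
        ((range (rankNormalForm ι κ R).mulVecLin).comap A.mulVecLin) ↔
      A.toBlocks₂₂.det ≠ 0 := by
  have hlower (w : κ → R) : (A *ᵥ Sum.elim 0 w) ∘ Sum.inr = A.toBlocks₂₂ *ᵥ w := by
    conv_lhs => rw [← fromBlocks_toBlocks A]
    simp [fromBlocks_mulVec]
  simp only [← Matrix.separatingRight_iff_det_ne_zero, separatingRight_iff_forall_mulVec_eq_zero,
    Submodule.disjoint_def, Submodule.mem_comap, mem_ker_rankNormalForm,
    mem_range_rankNormalForm, mulVecLin_apply]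
  constructor
  · intro h w hw
    have hzero : Sum.elim (0 : ι → R) w = 0 :=
      h _ (Sum.elim_comp_inl ..) ((hlower w).trans hw)
    rw [← Sum.elim_comp_inr (0 : ι → R) w, hzero, Pi.zero_comp]
  · intro h v hker hrange
    obtain ⟨w, rfl⟩ : ∃ w : κ → R, v = Sum.elim (0 : ι → R) w :=
      ⟨v ∘ Sum.inr, by rw [← hker, Sum.elim_comp_inl_inr]⟩
    rw [h w ((hlower w).symm.trans hrange), Sum.elim_zero_zero]

end RankNormalForm

theorem stmt0_general {n K : Type*} [Fintype n] [DecidableEq n] [Field K] (E A : Matrix n n K) :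
    ((pencilMatrix E A).det ≠ 0 ∧ (pencilMatrix E A).det.natDegree = E.rank) ↔
      (fromBlocks E 0 A E).rank = Fintype.card n + E.rank := by
  obtain ⟨V, U, e, hV, hU, hE : V * E * U = (rankNormalForm _ _ K).submatrix e e⟩ :=
    exists_rank_normal_form E
  rw [isUnit_iff_isUnit_det] at hV hU
  obtain ⟨B, hA⟩ : ∃ B, V * A * U = submatrix B e e :=
    ⟨(V * A * U).submatrix e.symm e.symm, by simp⟩
  have hdet : (pencilMatrix (rankNormalForm _ _ K) B).det =
      C V.det * (pencilMatrix E A).det * C U.det := by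
    rw [← det_pencilMatrix_mul_mul, hE, hA, det_pencilMatrix_submatrix_equiv]
  have hblock : (fromBlocks (rankNormalForm _ _ K) 0 B (rankNormalForm _ _ K)).rank =
      (fromBlocks E 0 A E).rank := by
    rw [← rank_fromBlocks_mul_mul hV hU, hE, hA, rank_fromBlocks_submatrix_equiv]
  have hrank : (rankNormalForm (Fin E.rank) (Fin (Fintype.card n - E.rank)) K).rank = E.rank := by
    rw [← rank_submatrix _ e e, ← hE, rank_mul_eq_left_of_isUnit_det _ _ hU,
      rank_mul_eq_right_of_isUnit_det _ _ hV]
  calc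
    _ ↔ (pencilMatrix (rankNormalForm _ _ K) B).det ≠ 0 ∧
          (pencilMatrix (rankNormalForm _ _ K) B).det.natDegree = Fintype.card (Fin E.rank) := by
      rw [hdet, natDegree_mul_C hU.ne_zero, natDegree_C_mul hV.ne_zero, Fintype.card_fin]
      simp [hU.ne_zero, hV.ne_zero]
    _ ↔ B.toBlocks₂₂.det ≠ 0 := det_pencilMatrix_rankNormalForm_natDegree_eq_iff B
    _ ↔ _ := by
      rw [← disjoint_ker_comap_range_rankNormalForm_iff,
        ← rank_fromBlocks_zero₁₂_eq_card_add_rank_iff, hblock, hrank, ← Fintype.card_congr e]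

theorem pencil_eq_det_pencilMatrix {n : Type*} [Fintype n] [DecidableEq n] (E A : Matrix n n ℝ) :
    pencil E A = (pencilMatrix E A).det :=
  rfl

/-- The pair `(E, A)` is regular and impulse-free iff
`rank [[E, 0], [A, E]] = n + rank E`. -/
theorem stmt0 (n : ℕ) (E A : Matrix (Fin n) (Fin n) ℝ) :
    (RegularPair E A ∧ ImpulseFreePair E A) ↔
      (Matrix.fromBlocks E 0 A E).rank = n + E.rank := by
  have hregular : ImpulseFreePair E A → RegularPair E A := And.left
  rw [and_iff_right_of_imp hregular, ImpulseFreePair, pencil_eq_det_pencilMatrix, stmt0_general,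
    Fintype.card_fin]
end

section
/- Let E, A, R be h×h real matrices with R invertible, let C be an l×h real matrix, and let λ_min > 0. Set K_z = −(1/(2λ_min))·R⁻ᵀ·Cᵀ. Suppose EᵀR = RᵀE ⪰ 0 and RᵀA + AᵀR − CᵀC ≺ 0. Then for every λ ≥ λ_min: Rᵀ(A + λ·K_z·C) + (A + λ·K_z·C)ᵀR = RᵀA + AᵀR − (λ/λ_min)·CᵀC ⪯ RᵀA + AᵀR − CᵀC ≺ 0; consequently the pair (E, A + λ·K_z·C) is regular, impulse-free, and asymptotically stable. -/
open Polynomial Matrix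

/-- The pair `(E, A)` is asymptotically stable. -/
def AsympStablePair {n : Type*} [Fintype n] [DecidableEq n] (E A : Matrix n n ℝ) : Prop :=
  ∀ lam : ℂ, (lam • E.map (Complex.ofReal) - A.map (Complex.ofReal)).det = 0 → lam.re < 0

/-!
Since `Rᵀ Kz` is a negative multiple of `Cᵀ`, the closed loop `F = A + λ Kz C` satisfies the
Lyapunov inequality `RᵀF + FᵀR ≺ 0`. Multiplying the pencil `X • E - F` on the left by `Rᵀ` leaves
regularity, impulse-freeness and stability unchanged, and turns the pair into `(S, N)` with
`S = RᵀE ⪰ 0` and `N + Nᵀ ≺ 0`.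

* If `s S v = N v` with `v ≠ 0`, then `s (v* S v) = v* N v` has negative real part, while
  `v* S v ≥ 0`; hence `s.re < 0`.
* In an orthonormal eigenbasis of `S`, the pair becomes a block pair whose first matrix is
  `diag(D, 0)` with `D` invertible, and the lower right block of the second matrix, being a
  compression of `N`, is invertible. Taking its Schur complement leaves, up to a nonzero constant,
  a pencil with leading matrix `D`, whose degree is the size of `D`, that is, the rank of `S`.
-/

section PencilPolynomial

variable {m n : Type*} [Fintype m] [DecidableEq m] [Fintype n] [DecidableEq n]

lemma pencil_eq_det (E A : Matrix n n ℝ) :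
    pencil E A = ((X : ℝ[X]) • E.map C + (-A).map C).det := by
  rw [pencil]
  congr 1
  ext i j : 1
  simp [sub_eq_add_neg]

lemma coeff_pencil_card (E A : Matrix n n ℝ) :
    (pencil E A).coeff (Fintype.card n) = E.det := by
  rw [pencil_eq_det, coeff_det_X_add_C_card]

lemma pencil_ne_zero_of_det_ne_zero {E : Matrix n n ℝ} (hE : E.det ≠ 0) (A : Matrix n n ℝ) :
    pencil E A ≠ 0 := by
  intro h
  exact hE (by rw [← coeff_pencil_card E A, h, coeff_zero])

lemma natDegree_pencil_of_det_ne_zero {E : Matrix n n ℝ} (hE : E.det ≠ 0) (A : Matrix n n ℝ) :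
    (pencil E A).natDegree = Fintype.card n := by
  refine natDegree_eq_of_le_of_coeff_ne_zero ?_ ((coeff_pencil_card E A).trans_ne hE)
  rw [pencil_eq_det]
  exact natDegree_det_X_add_C_le E (-A)

lemma pencil_mul_mul (P Q E A : Matrix n n ℝ) :
    pencil (P * E * Q) (P * A * Q) = C (P.det * Q.det) * pencil E A := by
  have factor : (X : ℝ[X]) • (P * E * Q).map C + (-(P * A * Q)).map C
      = P.map C * ((X : ℝ[X]) • E.map C + (-A).map C) * Q.map C := by
    rw [← Matrix.neg_mul, ← Matrix.mul_neg]
    simp only [Matrix.map_mul, Matrix.mul_add, Matrix.add_mul, Matrix.mul_smul, Matrix.smul_mul]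
  simp only [pencil_eq_det, factor, det_mul, C_mul, RingHom.map_det, RingHom.mapMatrix_apply]
  ring

lemma pencil_fromBlocks_toBlock (E A : Matrix n n ℝ) (p : n → Prop) [DecidablePred p] :
    pencil
      (fromBlocks (E.toBlock p p) (E.toBlock p (¬p ·)) (E.toBlock (¬p ·) p)
        (E.toBlock (¬p ·) (¬p ·)))
      (fromBlocks (A.toBlock p p) (A.toBlock p (¬p ·)) (A.toBlock (¬p ·) p)
        (A.toBlock (¬p ·) (¬p ·))) = pencil E A := by
  rw [pencil_eq_det E A, det_toBlock _ p, pencil_eq_det]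
  congr 1
  ext (i | i) (j | j) : 2 <;> rfl

lemma pencil_fromBlocks_zero (E A₁₁ : Matrix m m ℝ) (A₁₂ : Matrix m n ℝ) (A₂₁ : Matrix n m ℝ)
    {A₂₂ : Matrix n n ℝ} (hA : A₂₂.det ≠ 0) :
    pencil (fromBlocks E 0 0 0) (fromBlocks A₁₁ A₁₂ A₂₁ A₂₂)
      = C (-A₂₂).det * pencil E (A₁₁ + A₁₂ * (-A₂₂)⁻¹ * A₂₁) := by
  have hunit : IsUnit (-A₂₂) := ((isUnit_iff_isUnit_det A₂₂).mpr hA.isUnit).neg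
  let : Invertible (-A₂₂) := hunit.invertible
  let : Invertible ((-A₂₂).map C) := Invertible.map (C : ℝ →+* ℝ[X]).mapMatrix (-A₂₂)
  have blocks : (X : ℝ[X]) • (fromBlocks E 0 0 (0 : Matrix n n ℝ)).map C
        + (-fromBlocks A₁₁ A₁₂ A₂₁ A₂₂).map C
      = fromBlocks ((X : ℝ[X]) • E.map C + (-A₁₁).map C) ((-A₁₂).map C)
          ((-A₂₁).map C) ((-A₂₂).map C) := by
    rw [fromBlocks_neg, fromBlocks_map, fromBlocks_map, fromBlocks_smul, fromBlocks_add]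
    simp
  have schur : (X : ℝ[X]) • E.map C + (-A₁₁).map C
        - (-A₁₂).map C * ⅟((-A₂₂).map C) * (-A₂₁).map C
      = (X : ℝ[X]) • E.map C + (-(A₁₁ + A₁₂ * (-A₂₂)⁻¹ * A₂₁)).map C := by
    have hinv : ⅟((-A₂₂).map C) = ((-A₂₂)⁻¹).map (C : ℝ →+* ℝ[X]) := by
      rw [← invOf_eq_nonsing_inv]
      rfl
    rw [hinv, ← Matrix.map_mul, ← Matrix.map_mul, add_sub_assoc,
      ← Matrix.map_sub _ (map_sub C)]
    simp only [Matrix.neg_mul, Matrix.mul_neg, neg_neg, neg_add, sub_eq_add_neg]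
  rw [pencil_eq_det, blocks, det_fromBlocks₂₂, schur, ← pencil_eq_det, RingHom.map_det,
    RingHom.mapMatrix_apply]

end PencilPolynomial

section Equivalence

variable {n : Type*} [Fintype n] [DecidableEq n] {P Q E A : Matrix n n ℝ}

lemma impulseFreePair_mul_mul_iff (hP : IsUnit P.det) (hQ : IsUnit Q.det) :
    ImpulseFreePair (P * E * Q) (P * A * Q) ↔ ImpulseFreePair E A := by
  have hPQ : P.det * Q.det ≠ 0 := (hP.mul hQ).ne_zero
  rw [ImpulseFreePair, ImpulseFreePair, pencil_mul_mul, natDegree_C_mul hPQ,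
    rank_mul_eq_left_of_isUnit_det _ _ hQ, rank_mul_eq_right_of_isUnit_det _ _ hP]
  simp only [ne_eq, mul_eq_zero, C_eq_zero, hPQ, false_or]

lemma impulseFreePair_mul_left_iff (hP : IsUnit P.det) :
    ImpulseFreePair (P * E) (P * A) ↔ ImpulseFreePair E A := by
  simpa using impulseFreePair_mul_mul_iff (Q := 1) (E := E) (A := A) hP (by simp)

lemma asympStablePair_of_mul_left (h : AsympStablePair (P * E) (P * A)) :
    AsympStablePair E A := by
  intro s hs
  have factor : s • (P * E).map Complex.ofReal - (P * A).map Complex.ofReal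
      = P.map Complex.ofReal * (s • E.map Complex.ofReal - A.map Complex.ofReal) := by
    have hmul (B : Matrix n n ℝ) :
        (P * B).map Complex.ofReal = P.map Complex.ofReal * B.map Complex.ofReal :=
      Matrix.map_mul (f := Complex.ofRealHom)
    rw [hmul, hmul, Matrix.mul_sub, Matrix.mul_smul]
  exact h s (by rw [factor, det_mul, hs, mul_zero])

end Equivalence

section Complexification

open scoped ComplexOrder

variable {𝕜 n : Type*} [RCLike 𝕜] [Finite n] {S : Matrix n n ℝ}

open scoped MatrixOrder in
lemma posSemidef_map_ofReal (hS : S.PosSemidef) :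
    (S.map (RCLike.ofReal : ℝ → 𝕜)).PosSemidef := by
  classical
  have := Fintype.ofFinite n
  obtain ⟨B, rfl⟩ := CStarAlgebra.nonneg_iff_eq_star_mul_self.mp hS.nonneg
  have factor : (star B * B).map (RCLike.ofReal : ℝ → 𝕜)
      = (B.map RCLike.ofReal)ᴴ * B.map RCLike.ofReal := by
    ext i j
    simp [Matrix.mul_apply, star_eq_conjTranspose]
  exact factor ▸ posSemidef_conjTranspose_mul_self _

lemma posDef_map_ofReal (hS : S.PosDef) : (S.map (RCLike.ofReal : ℝ → 𝕜)).PosDef := by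
  classical
  have := Fintype.ofFinite n
  rw [(posSemidef_map_ofReal hS.posSemidef).posDef_iff_det_ne_zero]
  have hdet : (S.map (RCLike.ofReal : ℝ → 𝕜)).det = RCLike.ofReal S.det :=
    (RingHom.map_det (algebraMap ℝ 𝕜) S).symm
  rw [hdet]
  exact RCLike.ofReal_ne_zero.mpr hS.det_pos.ne'

end Complexification

section Dissipativity

open scoped ComplexOrder

/-- `N` is strictly dissipative if its Hermitian part is negative definite. For a pair `(E, A)`, the
Lyapunov inequality `RᵀA + AᵀR ≺ 0` says that `Rᵀ * A` is strictly dissipative. -/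
def StrictlyDissipative {𝕜 n : Type*} [RCLike 𝕜] (N : Matrix n n 𝕜) : Prop :=
  (-(N + Nᴴ)).PosDef

namespace StrictlyDissipative

variable {𝕜 m n : Type*} [RCLike 𝕜] {N : Matrix n n 𝕜}

lemma submatrix (hN : StrictlyDissipative N) {f : m → n} (hf : f.Injective) :
    StrictlyDissipative (N.submatrix f f) :=
  PosDef.submatrix hN hf

lemma map_ofReal [Finite n] {N : Matrix n n ℝ} (hN : StrictlyDissipative N) :
    StrictlyDissipative (N.map (RCLike.ofReal : ℝ → 𝕜)) := by
  have hmap : -(N.map (RCLike.ofReal : ℝ → 𝕜) + (N.map RCLike.ofReal)ᴴ)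
      = (-(N + Nᴴ)).map RCLike.ofReal := by
    ext i j
    simp
  rw [StrictlyDissipative, hmap]
  exact posDef_map_ofReal hN

variable [Fintype n]

lemma conjTranspose_mul_mul_same [Fintype m] (hN : StrictlyDissipative N) {B : Matrix n m 𝕜}
    (hB : Function.Injective B.mulVec) : StrictlyDissipative (Bᴴ * N * B) := by
  have congruence : -(Bᴴ * N * B + (Bᴴ * N * B)ᴴ) = Bᴴ * (-(N + Nᴴ)) * B := by
    simp [Matrix.mul_add, Matrix.add_mul, Matrix.mul_assoc]
  rw [StrictlyDissipative, congruence]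
  exact PosDef.conjTranspose_mul_mul_same hN hB

lemma re_dotProduct_mulVec_neg (hN : StrictlyDissipative N) {v : n → 𝕜} (hv : v ≠ 0) :
    RCLike.re (star v ⬝ᵥ N *ᵥ v) < 0 := by
  have hpos := hN.re_dotProduct_pos hv
  have hconj : star v ⬝ᵥ Nᴴ *ᵥ v = star (star v ⬝ᵥ N *ᵥ v) := by
    rw [star_dotProduct, star_mulVec, ← dotProduct_mulVec, conjTranspose_conjTranspose]
  simp only [neg_mulVec, add_mulVec, dotProduct_neg, dotProduct_add, hconj, map_neg, map_add,
    RCLike.star_def, RCLike.conj_re] at hpos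
  linarith

lemma det_ne_zero [DecidableEq n] (hN : StrictlyDissipative N) : N.det ≠ 0 := by
  intro hdet
  obtain ⟨v, hv, hNv⟩ := exists_mulVec_eq_zero_iff.mpr hdet
  simpa [hNv] using hN.re_dotProduct_mulVec_neg hv

lemma re_neg_of_det_smul_sub_eq_zero [DecidableEq n] {S N : Matrix n n 𝕜} {s : 𝕜}
    (hN : StrictlyDissipative N) (hS : S.PosSemidef) (hs : (s • S - N).det = 0) :
    RCLike.re s < 0 := by
  obtain ⟨v, hv, hker⟩ := exists_mulVec_eq_zero_iff.mpr hs
  have eigen : N *ᵥ v = s • S *ᵥ v := by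
    rw [sub_mulVec, smul_mulVec, sub_eq_zero] at hker
    exact hker.symm
  have hSv := hS.dotProduct_mulVec_nonneg v
  have hNv := hN.re_dotProduct_mulVec_neg hv
  rw [eigen, dotProduct_smul, smul_eq_mul, RCLike.mul_re, (RCLike.nonneg_iff.mp hSv).2, mul_zero,
    sub_zero] at hNv
  exact neg_of_mul_neg_left hNv (RCLike.nonneg_iff.mp hSv).1

end StrictlyDissipative

end Dissipativity

section Lyapunov

variable {n : Type*} [Fintype n] [DecidableEq n] {S N P E A : Matrix n n ℝ}

lemma StrictlyDissipative.asympStablePair (hN : StrictlyDissipative N) (hS : S.PosSemidef) :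
    AsympStablePair S N := fun _ hs ↦
  hN.map_ofReal.re_neg_of_det_smul_sub_eq_zero (posSemidef_map_ofReal hS) hs

lemma StrictlyDissipative.impulseFreePair_diagonal (hN : StrictlyDissipative N) (d : n → ℝ) :
    ImpulseFreePair (diagonal d) N := by
  let p : n → Prop := (d · ≠ 0)
  let D : {i // p i} → ℝ := fun i ↦ d i
  have hD : (diagonal D).det ≠ 0 := by
    rw [det_diagonal]
    exact Finset.prod_ne_zero_iff.mpr fun i _ ↦ i.2
  have hN₂₂ : (N.toBlock (¬p ·) (¬p ·)).det ≠ 0 :=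
    (hN.submatrix Subtype.val_injective).det_ne_zero
  have blocks : fromBlocks ((diagonal d).toBlock p p) ((diagonal d).toBlock p (¬p ·))
      ((diagonal d).toBlock (¬p ·) p) ((diagonal d).toBlock (¬p ·) (¬p ·))
      = fromBlocks (diagonal D) 0 0 0 := by
    have hzero : (fun i : {i // ¬p i} ↦ d i) = 0 := funext fun i ↦ not_not.mp i.2
    have hdisj : Disjoint p (¬p ·) := disjoint_compl_right
    rw [toBlock_diagonal_self, toBlock_diagonal_self, hzero,
      toBlock_diagonal_disjoint d hdisj, toBlock_diagonal_disjoint d hdisj.symm, diagonal_zero']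
  have hdet : (-N.toBlock (¬p ·) (¬p ·)).det ≠ 0 := by
    simpa [det_neg] using hN₂₂
  rw [ImpulseFreePair, ← pencil_fromBlocks_toBlock _ N p, blocks,
    pencil_fromBlocks_zero _ _ _ _ hN₂₂, natDegree_C_mul hdet,
    natDegree_pencil_of_det_ne_zero hD, rank_diagonal]
  exact ⟨mul_ne_zero (C_ne_zero.mpr hdet) (pencil_ne_zero_of_det_ne_zero hD _), rfl⟩

lemma StrictlyDissipative.impulseFreePair (hN : StrictlyDissipative N) (hS : S.IsHermitian) :
    ImpulseFreePair S N := by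
  let U : Matrix n n ℝ := hS.eigenvectorUnitary
  have hU : IsUnit U := (Unitary.toUnits hS.eigenvectorUnitary).isUnit
  have hdiag : Uᴴ * S * U = diagonal hS.eigenvalues := by
    simpa [Unitary.conjStarAlgAut_apply, star_eq_conjTranspose] using
      hS.conjStarAlgAut_star_eigenvectorUnitary
  have hUdet : IsUnit U.det := (isUnit_iff_isUnit_det U).mp hU
  have hUdet' : IsUnit (Uᴴ).det := by simpa using hUdet
  rw [← impulseFreePair_mul_mul_iff hUdet' hUdet, hdiag]
  have hUinj : Function.Injective U.mulVec := mulVec_injective_of_isUnit hU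
  exact (hN.conjTranspose_mul_mul_same hUinj).impulseFreePair_diagonal _

lemma impulseFreePair_of_strictlyDissipative_mul_left (hE : (P * E).IsHermitian)
    (hA : StrictlyDissipative (P * A)) : ImpulseFreePair E A := by
  have hP : P.det ≠ 0 := left_ne_zero_of_mul (det_mul P A ▸ hA.det_ne_zero)
  exact (impulseFreePair_mul_left_iff hP.isUnit).mp (hA.impulseFreePair hE)

lemma asympStablePair_of_strictlyDissipative_mul_left (hE : (P * E).PosSemidef)
    (hA : StrictlyDissipative (P * A)) : AsympStablePair E A :=
  asympStablePair_of_mul_left (hA.asympStablePair hE)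

end Lyapunov

section OutputInjection

variable {l n : Type*}

lemma lyapunov_add_smul_mul_eq {α : Type*} [CommRing α] [Fintype l] [Fintype n]
    {A R : Matrix n n α} {C : Matrix l n α} {K : Matrix n l α} {c : α} (hK : Rᵀ * K = c • Cᵀ)
    (t : α) :
    Rᵀ * (A + t • (K * C)) + (A + t • (K * C))ᵀ * R
      = Rᵀ * A + Aᵀ * R + (2 * t * c) • (Cᵀ * C) := by
  have hK' : Kᵀ * R = c • C := by
    simpa only [transpose_mul, transpose_transpose, transpose_smul] using congrArg transpose hK
  have hleft : Rᵀ * (K * C) = c • (Cᵀ * C) := by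
    rw [← Matrix.mul_assoc, hK, Matrix.smul_mul]
  have hright : (K * C)ᵀ * R = c • (Cᵀ * C) := by
    rw [transpose_mul, Matrix.mul_assoc, hK', Matrix.mul_smul]
  rw [Matrix.mul_add, transpose_add, Matrix.add_mul, Matrix.mul_smul, transpose_smul,
    Matrix.smul_mul, hleft, hright]
  module

lemma posSemidef_sub_sub_sub_smul {P : Matrix n n ℝ} (hP : P.PosSemidef) (M : Matrix n n ℝ)
    {c : ℝ} (hc : 1 ≤ c) : ((M - P) - (M - c • P)).PosSemidef := by
  have hsub : (M - P) - (M - c • P) = (c - 1) • P := by module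
  exact hsub ▸ hP.smul (sub_nonneg.mpr hc)

end OutputInjection

/-- With `K_z = −(1/(2λ_min)) R⁻ᵀ Cᵀ`, `EᵀR = RᵀE ⪰ 0` and `RᵀA + AᵀR − CᵀC ≺ 0`,
for every `λ ≥ λ_min` the closed-loop Lyapunov identity and Loewner bounds hold, and
`(E, A + λ K_z C)` is regular, impulse-free and asymptotically stable. -/
theorem stmt9 (h l : ℕ) (E A R : Matrix (Fin h) (Fin h) ℝ) (hR : IsUnit R.det)
    (C : Matrix (Fin l) (Fin h) ℝ) (lmin : ℝ) (hlmin : 0 < lmin)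
    (Kz : Matrix (Fin h) (Fin l) ℝ)
    (hKz : Kz = -(1 / (2 * lmin)) • ((R⁻¹)ᵀ * Cᵀ))
    (h1 : Eᵀ * R = Rᵀ * E) (h2 : (Eᵀ * R).PosSemidef)
    (h3 : (-(Rᵀ * A + Aᵀ * R - Cᵀ * C)).PosDef) :
    ∀ lam : ℝ, lmin ≤ lam →
      (Rᵀ * (A + lam • (Kz * C)) + (A + lam • (Kz * C))ᵀ * R
          = Rᵀ * A + Aᵀ * R - (lam / lmin) • (Cᵀ * C)) ∧
      ((Rᵀ * A + Aᵀ * R - Cᵀ * C)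
          - (Rᵀ * A + Aᵀ * R - (lam / lmin) • (Cᵀ * C))).PosSemidef ∧
      (-(Rᵀ * A + Aᵀ * R - (lam / lmin) • (Cᵀ * C))).PosDef ∧
      RegularPair E (A + lam • (Kz * C)) ∧
      ImpulseFreePair E (A + lam • (Kz * C)) ∧
      AsympStablePair E (A + lam • (Kz * C)) := by
  intro lam hlam
  have hRKz : Rᵀ * Kz = -(1 / (2 * lmin)) • Cᵀ := by
    rw [hKz, Matrix.mul_smul, transpose_nonsing_inv,
      mul_nonsing_inv_cancel_left _ _ (isUnit_det_transpose R hR)]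
  have hgain : 2 * lam * -(1 / (2 * lmin)) = -(lam / lmin) := by field_simp
  have hlyap : Rᵀ * (A + lam • (Kz * C)) + (A + lam • (Kz * C))ᵀ * R
      = Rᵀ * A + Aᵀ * R - (lam / lmin) • (Cᵀ * C) := by
    rw [lyapunov_add_smul_mul_eq hRKz, hgain, neg_smul, ← sub_eq_add_neg]
  have hle := posSemidef_sub_sub_sub_smul (posSemidef_conjTranspose_mul_self C)
    (Rᵀ * A + Aᵀ * R) ((one_le_div hlmin).mpr hlam)
  rw [conjTranspose_eq_transpose_of_trivial C] at hle
  have hneg : (-(Rᵀ * A + Aᵀ * R - (lam / lmin) • (Cᵀ * C))).PosDef := by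
    simpa using h3.add_posSemidef hle
  have hdiss : StrictlyDissipative (Rᵀ * (A + lam • (Kz * C))) := by
    rwa [StrictlyDissipative, conjTranspose_eq_transpose_of_trivial, transpose_mul,
      transpose_transpose, hlyap]
  have hER : (Rᵀ * E).PosSemidef := h1 ▸ h2
  have himp := impulseFreePair_of_strictlyDissipative_mul_left hER.isHermitian hdiss
  have hstab := asympStablePair_of_strictlyDissipative_mul_left hER hdiss
  exact ⟨hlyap, hle, hneg, himp.1, himp, hstab⟩
end

section
/- For any n×n real matrices E and A, the pencil polynomial p(X) = det(X·E − A) has degree at most rank(E) (in particular, its natDegree is at most rank(E)). -/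
open Polynomial Matrix

/-!
Multiplying `E` and `A` on both sides by matrices of determinant one changes neither
`det (X • E - A)` nor the rank of `E`, so Gaussian elimination reduces to the case where `E` is
diagonal. Then every row of `X • E - A` has entries of degree at most one, and the rows where the
diagonal entry of `E` vanishes are constant; the Leibniz expansion bounds the degree by the number
of the remaining rows, which is the rank of `E`.
-/

section CommRing

variable {m n R : Type*} [CommRing R]

/-- The matrix pencil `X • E - A` of a pair of matrices of the same shape, as a matrix of
polynomials. For square real matrices its determinant is `pencil E A`. -/
noncomputable def matrixPencil (E A : Matrix m n R) : Matrix m n R[X] :=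
  (X : R[X]) • E.map C - A.map C

theorem matrixPencil_apply (E A : Matrix m n R) (i : m) (j : n) :
    matrixPencil E A i j = X * C (E i j) - C (A i j) :=
  rfl

theorem natDegree_matrixPencil_apply_le_one (E A : Matrix m n R) (i : m) (j : n) :
    (matrixPencil E A i j).natDegree ≤ 1 := by
  rw [matrixPencil_apply]
  compute_degree

theorem natDegree_matrixPencil_apply_of_eq_zero {E : Matrix m n R} {i : m} {j : n}
    (hE : E i j = 0) (A : Matrix m n R) : (matrixPencil E A i j).natDegree = 0 := by
  rw [matrixPencil_apply, hE, C_0, mul_zero, zero_sub, natDegree_neg, natDegree_C]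

theorem matrixPencil_mul_mul {l o : Type*} [Fintype m] [Fintype n] (U : Matrix l m R)
    (E A : Matrix m n R) (V : Matrix n o R) :
    matrixPencil (U * E * V) (U * A * V) = U.map C * matrixPencil E A * V.map C := by
  simp only [matrixPencil, Matrix.map_mul, Matrix.mul_sub, Matrix.sub_mul, Matrix.mul_smul,
    Matrix.smul_mul]

variable [Fintype n] [DecidableEq n]

theorem det_matrixPencil_mul_mul (U E A V : Matrix n n R) :
    (matrixPencil (U * E * V) (U * A * V)).det =
      C U.det * (matrixPencil E A).det * C V.det := by
  simp only [matrixPencil_mul_mul, det_mul, RingHom.map_det, RingHom.mapMatrix_apply]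

theorem natDegree_det_le_sum_of_natDegree_le (M : Matrix n n R[X]) (d : n → ℕ)
    (hM : ∀ i j, (M i j).natDegree ≤ d i) : M.det.natDegree ≤ ∑ i, d i := by
  rw [← det_transpose, det_apply]
  refine natDegree_sum_le_of_forall_le _ _ fun σ _ => ?_
  calc (Equiv.Perm.sign σ • ∏ i, Mᵀ (σ i) i).natDegree
      ≤ (∏ i, M i (σ i)).natDegree := natDegree_smul_le _ _
    _ ≤ ∑ i, (M i (σ i)).natDegree := natDegree_prod_le _ _
    _ ≤ ∑ i, d i := Finset.sum_le_sum fun i _ => hM i (σ i)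

theorem natDegree_det_matrixPencil_diagonal_le_card [DecidableEq R] (D : n → R)
    (A : Matrix n n R) :
    (matrixPencil (diagonal D) A).det.natDegree ≤ Fintype.card {i // D i ≠ 0} := by
  rw [Fintype.card_subtype, Finset.card_filter]
  refine natDegree_det_le_sum_of_natDegree_le _ _ fun i j => ?_
  split_ifs with hDi
  · exact natDegree_matrixPencil_apply_le_one _ _ i j
  · have hrow : diagonal D i j = 0 := by
      rw [diagonal_apply, not_not.mp hDi, ite_self]
    exact (natDegree_matrixPencil_apply_of_eq_zero hrow A).le

end CommRing

section Field

variable {n K : Type*} [Fintype n] [DecidableEq n] [Field K]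

theorem exists_det_eq_one_mul_mul_eq_diagonal (M : Matrix n n K) :
    ∃ (U V : Matrix n n K) (D : n → K), U.det = 1 ∧ V.det = 1 ∧ U * M * V = diagonal D := by
  obtain ⟨L, L', D, hD⟩ := Pivot.exists_list_transvec_mul_mul_list_transvec_eq_diagonal M
  exact ⟨_, _, D, TransvectionStruct.det_toMatrix_prod L,
    TransvectionStruct.det_toMatrix_prod L', hD⟩

theorem stmt15_general (E A : Matrix n n K) :
    (matrixPencil E A).det.degree ≤ E.rank := by
  classical
  obtain ⟨U, V, D, hU, hV, hD⟩ := exists_det_eq_one_mul_mul_eq_diagonal E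
  have det_eq : (matrixPencil E A).det = (matrixPencil (diagonal D) (U * A * V)).det := by
    rw [← hD, det_matrixPencil_mul_mul, hU, hV, C_1, one_mul, mul_one]
  have rank_eq : (diagonal D).rank = E.rank := by
    rw [← hD, rank_mul_eq_left_of_isUnit_det V _ (hV ▸ isUnit_one),
      rank_mul_eq_right_of_isUnit_det U _ (hU ▸ isUnit_one)]
  rw [det_eq, ← rank_eq, rank_diagonal]
  exact degree_le_of_natDegree_le (natDegree_det_matrixPencil_diagonal_le_card D _)

end Field

/-- The pencil polynomial `det(X·E − A)` has degree at most `rank E`;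
in particular its `natDegree` is at most `rank E`. -/
theorem stmt15 (n : ℕ) (E A : Matrix (Fin n) (Fin n) ℝ) :
    (pencil E A).degree ≤ (E.rank : WithBot ℕ) ∧ (pencil E A).natDegree ≤ E.rank :=
  have degree_le : (pencil E A).degree ≤ E.rank := stmt15_general E A
  ⟨degree_le, natDegree_le_of_degree_le degree_le⟩
end

section
/- Let E, A, R be h×h real matrices with R invertible, C an l×h real matrix, and λ_min > 0, and set K_z = −(1/(2λ_min))·R⁻ᵀ·Cᵀ. Assume EᵀR = RᵀE ⪰ 0 and RᵀA + AᵀR ⪯ 0. Let N ≥ 2 and let Δ : ℝ → ℝ^{(N−1)×(N−1)} take symmetric positive semidefinite values, and let x̂ : ℝ → ℝ^{(N−1)h} be differentiable with (I_{N−1} ⊗ E)·x̂′(t) = (I_{N−1} ⊗ A + Δ(t) ⊗ K_z·C)·x̂(t) for all t. Then V(t) := x̂(t)ᵀ·(I_{N−1} ⊗ EᵀR)·x̂(t) satisfies V′(t) = x̂(t)ᵀ·(I_{N−1} ⊗ (RᵀA + AᵀR) − λ_min⁻¹·Δ(t) ⊗ CᵀC)·x̂(t) ≤ −λ_min⁻¹·x̂(t)ᵀ·(Δ(t)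 ⊗ CᵀC)·x̂(t) ≤ 0 for all t; in particular V is nonincreasing. -/
open Matrix Kronecker

/-!
Along a descriptor system `E x' = A x` with `EᵀR = RᵀE`, the product rule turns both halves of
`(xᵀEᵀRx)'` into terms in `E x'`, so that the derivative is `xᵀ(RᵀA + AᵀR)x` although `x'` itself
is not determined by `x`. For the networked system the feedback gain is chosen such that
`RᵀK = -(1/(2λ))Cᵀ`; the coupling `Δ ⊗ KC` then contributes exactly `-λ⁻¹ Δ ⊗ CᵀC`, which is
negative semidefinite, as is the contribution `I ⊗ (RᵀA + AᵀR)` of the individual agents.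
-/

section Calculus

variable {𝕜 m n : Type*} [NontriviallyNormedField 𝕜] [Fintype n]

theorem hasDerivAt_dotProduct {u v : 𝕜 → n → 𝕜} {u' v' : n → 𝕜} {t : 𝕜}
    (hu : HasDerivAt u u' t) (hv : HasDerivAt v v' t) :
    HasDerivAt (fun s => u s ⬝ᵥ v s) (u' ⬝ᵥ v t + u t ⬝ᵥ v') t := by
  simp only [dotProduct, ← Finset.sum_add_distrib]
  exact .fun_sum fun i _ => (hasDerivAt_pi.1 hu i).mul (hasDerivAt_pi.1 hv i)

theorem hasDerivAt_mulVec (M : Matrix m n 𝕜) {v : 𝕜 → n → 𝕜} {v' : n → 𝕜} {t : 𝕜}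
    (hv : HasDerivAt v v' t) : HasDerivAt (fun s => M *ᵥ v s) (M *ᵥ v') t :=
  hasDerivAt_pi.2 fun i => by
    simpa only [mulVec, zero_dotProduct, zero_add] using
      hasDerivAt_dotProduct (hasDerivAt_const t (M i)) hv

theorem hasDerivAt_dotProduct_mulVec_of_descriptor [Fintype m] {E A R : Matrix m n 𝕜}
    (hER : Eᵀ * R = Rᵀ * E) {x : 𝕜 → n → 𝕜} {x' : n → 𝕜} {t : 𝕜}
    (hx : HasDerivAt x x' t) (hdyn : E *ᵥ x' = A *ᵥ x t) :
    HasDerivAt (fun s => x s ⬝ᵥ (Eᵀ * R) *ᵥ x s) (x t ⬝ᵥ (Rᵀ * A + Aᵀ * R) *ᵥ x t) t := by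
  convert hasDerivAt_dotProduct hx (hasDerivAt_mulVec (Eᵀ * R) hx) using 1
  have left_term : x' ⬝ᵥ (Eᵀ * R) *ᵥ x t = x t ⬝ᵥ (Aᵀ * R) *ᵥ x t := by
    rw [← mulVec_mulVec, ← mulVec_mulVec, dotProduct_transpose_mulVec, hdyn,
      dotProduct_transpose_mulVec]
  have right_term : x t ⬝ᵥ (Eᵀ * R) *ᵥ x' = x t ⬝ᵥ (Rᵀ * A) *ᵥ x t := by
    rw [hER, ← mulVec_mulVec, hdyn, mulVec_mulVec]
  rw [left_term, right_term, add_mulVec, dotProduct_add, add_comm]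

end Calculus

section Kronecker

variable {ι m n p α : Type*} [Fintype ι] [Fintype m] [Fintype p]

theorem transpose_one_kronecker_mul_one_kronecker [DecidableEq ι] [CommSemiring α]
    (M N : Matrix m n α) :
    ((1 : Matrix ι ι α) ⊗ₖ M)ᵀ * ((1 : Matrix ι ι α) ⊗ₖ N) = 1 ⊗ₖ (Mᵀ * N) := by
  rw [← kroneckerMap_transpose, transpose_one, ← mul_kronecker_mul, one_mul]

theorem transpose_one_kronecker_mul_feedback [DecidableEq ι] [CommSemiring α]
    {A R : Matrix m n α} {K : Matrix m p α} {C : Matrix p n α} {c : α}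
    (hK : Rᵀ * K = c • Cᵀ) (Δ : Matrix ι ι α) :
    ((1 : Matrix ι ι α) ⊗ₖ R)ᵀ * (1 ⊗ₖ A + Δ ⊗ₖ (K * C)) =
      1 ⊗ₖ (Rᵀ * A) + c • (Δ ⊗ₖ (Cᵀ * C)) := by
  rw [Matrix.mul_add, transpose_one_kronecker_mul_one_kronecker, ← kroneckerMap_transpose,
    transpose_one, ← mul_kronecker_mul, one_mul, ← Matrix.mul_assoc, hK, Matrix.smul_mul,
    kronecker_smul]

theorem lyapunov_kronecker_feedback [DecidableEq ι] [CommSemiring α]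
    {A R : Matrix m n α} {K : Matrix m p α} {C : Matrix p n α} {c : α}
    (hK : Rᵀ * K = c • Cᵀ) {Δ : Matrix ι ι α} (hΔ : Δ.IsSymm) :
    ((1 : Matrix ι ι α) ⊗ₖ R)ᵀ * (1 ⊗ₖ A + Δ ⊗ₖ (K * C)) +
        (1 ⊗ₖ A + Δ ⊗ₖ (K * C))ᵀ * ((1 : Matrix ι ι α) ⊗ₖ R) =
      1 ⊗ₖ (Rᵀ * A + Aᵀ * R) + (2 * c) • (Δ ⊗ₖ (Cᵀ * C)) := by
  have h := transpose_one_kronecker_mul_feedback (A := A) hK Δ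
  have h_transpose : (1 ⊗ₖ A + Δ ⊗ₖ (K * C))ᵀ * ((1 : Matrix ι ι α) ⊗ₖ R) =
      1 ⊗ₖ (Aᵀ * R) + c • (Δ ⊗ₖ (Cᵀ * C)) := by
    simpa only [transpose_mul, transpose_add, transpose_smul, transpose_transpose, transpose_one,
      ← kroneckerMap_transpose, hΔ.eq] using congrArg transpose h
  rw [h, h_transpose, kronecker_add, two_mul, add_smul]
  abel

variable [Fintype n]

theorem dotProduct_kronecker_mulVec_nonneg {P : Matrix ι ι ℝ} {Q : Matrix n n ℝ}
    (hP : P.PosSemidef) (hQ : Q.PosSemidef) (x : ι × n → ℝ) :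
    0 ≤ x ⬝ᵥ (P ⊗ₖ Q) *ᵥ x := by
  simpa only [star_trivial] using (hP.kronecker hQ).dotProduct_mulVec_nonneg x

theorem dotProduct_kronecker_mulVec_nonpos {P : Matrix ι ι ℝ} {Q : Matrix n n ℝ}
    (hP : P.PosSemidef) (hQ : (-Q).PosSemidef) (x : ι × n → ℝ) :
    x ⬝ᵥ (P ⊗ₖ Q) *ᵥ x ≤ 0 := by
  have h := dotProduct_kronecker_mulVec_nonneg hP hQ x
  rw [← neg_one_smul ℝ Q, kronecker_smul, neg_one_smul, neg_mulVec, dotProduct_neg] at h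
  exact neg_nonneg.1 h

end Kronecker

section Network

variable {ι m n p : Type*} [Fintype ι] [DecidableEq ι] [Fintype m] [Fintype n] [Fintype p]
  {E A R : Matrix m n ℝ} {K : Matrix m p ℝ} {C : Matrix p n ℝ} {lam : ℝ}

theorem hasDerivAt_network_lyapunov (hK : Rᵀ * K = -(1 / (2 * lam)) • Cᵀ)
    (hER : Eᵀ * R = Rᵀ * E) {Δ : Matrix ι ι ℝ} (hΔ : Δ.IsSymm)
    {x : ℝ → ι × n → ℝ} {x' : ι × n → ℝ} {t : ℝ} (hx : HasDerivAt x x' t)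
    (hdyn : ((1 : Matrix ι ι ℝ) ⊗ₖ E) *ᵥ x' = (1 ⊗ₖ A + Δ ⊗ₖ (K * C)) *ᵥ x t) :
    HasDerivAt (fun s => x s ⬝ᵥ ((1 : Matrix ι ι ℝ) ⊗ₖ (Eᵀ * R)) *ᵥ x s)
      (x t ⬝ᵥ ((1 : Matrix ι ι ℝ) ⊗ₖ (Rᵀ * A + Aᵀ * R) - lam⁻¹ • (Δ ⊗ₖ (Cᵀ * C))) *ᵥ x t) t := by
  have hER_network : ((1 : Matrix ι ι ℝ) ⊗ₖ E)ᵀ * ((1 : Matrix ι ι ℝ) ⊗ₖ R) =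
      ((1 : Matrix ι ι ℝ) ⊗ₖ R)ᵀ * ((1 : Matrix ι ι ℝ) ⊗ₖ E) := by
    simp only [transpose_one_kronecker_mul_one_kronecker, hER]
  have hcoeff : 2 * -(1 / (2 * lam)) = -lam⁻¹ := by ring
  have h := hasDerivAt_dotProduct_mulVec_of_descriptor hER_network hx hdyn
  rwa [transpose_one_kronecker_mul_one_kronecker, lyapunov_kronecker_feedback hK hΔ, hcoeff,
    neg_smul, ← sub_eq_add_neg] at h

theorem stmt19_general (hlam : 0 < lam) (hK : Rᵀ * K = -(1 / (2 * lam)) • Cᵀ)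
    (hER : Eᵀ * R = Rᵀ * E) (hRA : (-(Rᵀ * A + Aᵀ * R)).PosSemidef)
    {Δ : ℝ → Matrix ι ι ℝ} (hΔ : ∀ t, (Δ t).PosSemidef)
    {x : ℝ → ι × n → ℝ} (hx : Differentiable ℝ x)
    (hdyn : ∀ t, ((1 : Matrix ι ι ℝ) ⊗ₖ E) *ᵥ deriv x t =
      (1 ⊗ₖ A + Δ t ⊗ₖ (K * C)) *ᵥ x t)
    {V : ℝ → ℝ} (hV : V = fun t => x t ⬝ᵥ ((1 : Matrix ι ι ℝ) ⊗ₖ (Eᵀ * R)) *ᵥ x t) :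
    (∀ t, deriv V t =
        x t ⬝ᵥ ((1 : Matrix ι ι ℝ) ⊗ₖ (Rᵀ * A + Aᵀ * R) - lam⁻¹ • (Δ t ⊗ₖ (Cᵀ * C))) *ᵥ x t ∧
      deriv V t ≤ -lam⁻¹ * (x t ⬝ᵥ (Δ t ⊗ₖ (Cᵀ * C)) *ᵥ x t) ∧
      -lam⁻¹ * (x t ⬝ᵥ (Δ t ⊗ₖ (Cᵀ * C)) *ᵥ x t) ≤ 0) ∧
    Antitone V := by
  have hderiv t := hV ▸ hasDerivAt_network_lyapunov hK hER
    (isHermitian_iff_isSymm.1 (hΔ t).isHermitian) (hx t).hasDerivAt (hdyn t)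
  have hle t : deriv V t ≤ -lam⁻¹ * (x t ⬝ᵥ (Δ t ⊗ₖ (Cᵀ * C)) *ᵥ x t) := by
    rw [(hderiv t).deriv, sub_mulVec, smul_mulVec, dotProduct_sub, dotProduct_smul, smul_eq_mul]
    linarith [dotProduct_kronecker_mulVec_nonpos (.one (n := ι)) hRA (x t)]
  have hCC : (Cᵀ * C).PosSemidef := by
    simpa only [conjTranspose_eq_transpose_of_trivial] using posSemidef_conjTranspose_mul_self C
  have hnonpos t : -lam⁻¹ * (x t ⬝ᵥ (Δ t ⊗ₖ (Cᵀ * C)) *ᵥ x t) ≤ 0 :=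
    mul_nonpos_of_nonpos_of_nonneg (neg_nonpos.2 (inv_nonneg.2 hlam.le))
      (dotProduct_kronecker_mulVec_nonneg (hΔ t) hCC (x t))
  exact ⟨fun t => ⟨(hderiv t).deriv, hle t, hnonpos t⟩,
    antitone_of_deriv_nonpos (fun t => (hderiv t).differentiableAt)
      fun t => (hle t).trans (hnonpos t)⟩

end Network

/-- Lyapunov monotonicity estimate (equations (28)–(29)) in the proof of the paper's
Theorem 3: along the jointly-connected-case dynamics
`(I ⊗ E) x̂′ = (I ⊗ A + Δ(t) ⊗ K_z C) x̂` with `K_z = −(1/(2λ_min)) R⁻ᵀ Cᵀ`,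
`EᵀR = RᵀE ⪰ 0`, `RᵀA + AᵀR ⪯ 0`, and `Δ(t) ⪰ 0`, the function
`V(t) = x̂ᵀ(I ⊗ EᵀR)x̂` satisfies
`V′ = x̂ᵀ(I ⊗ (RᵀA + AᵀR) − λ_min⁻¹ Δ(t) ⊗ CᵀC)x̂ ≤ −λ_min⁻¹ x̂ᵀ(Δ(t) ⊗ CᵀC)x̂ ≤ 0`,
so `V` is nonincreasing. -/
theorem stmt19 (N h l : ℕ) (hN : 2 ≤ N)
    (E A R : Matrix (Fin h) (Fin h) ℝ) (hR : IsUnit R.det)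
    (C : Matrix (Fin l) (Fin h) ℝ)
    (lmin : ℝ) (hlmin : 0 < lmin)
    (Kz : Matrix (Fin h) (Fin l) ℝ) (hKz : Kz = -(1 / (2 * lmin)) • ((R⁻¹)ᵀ * Cᵀ))
    (h1 : Eᵀ * R = Rᵀ * E) (h2 : (Eᵀ * R).PosSemidef)
    (h3 : (-(Rᵀ * A + Aᵀ * R)).PosSemidef)
    (Δ : ℝ → Matrix (Fin (N - 1)) (Fin (N - 1)) ℝ) (hΔ : ∀ t, (Δ t).PosSemidef)
    (xhat : ℝ → Fin (N - 1) × Fin h → ℝ) (hx : Differentiable ℝ xhat)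
    (heq : ∀ t, ((1 : Matrix (Fin (N - 1)) (Fin (N - 1)) ℝ) ⊗ₖ E).mulVec (deriv xhat t)
      = (((1 : Matrix (Fin (N - 1)) (Fin (N - 1)) ℝ) ⊗ₖ A)
          + (Δ t ⊗ₖ (Kz * C))).mulVec (xhat t))
    (V : ℝ → ℝ)
    (hV : V = fun t => xhat t ⬝ᵥ
      (((1 : Matrix (Fin (N - 1)) (Fin (N - 1)) ℝ) ⊗ₖ (Eᵀ * R)).mulVec (xhat t))) :
    (∀ t, deriv V t
        = xhat t ⬝ᵥ
          ((((1 : Matrix (Fin (N - 1)) (Fin (N - 1)) ℝ) ⊗ₖ (Rᵀ * A + Aᵀ * R))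
            - lmin⁻¹ • (Δ t ⊗ₖ (Cᵀ * C))).mulVec (xhat t)) ∧
      deriv V t ≤ -lmin⁻¹ * (xhat t ⬝ᵥ ((Δ t ⊗ₖ (Cᵀ * C)).mulVec (xhat t))) ∧
      -lmin⁻¹ * (xhat t ⬝ᵥ ((Δ t ⊗ₖ (Cᵀ * C)).mulVec (xhat t))) ≤ 0) ∧
    Antitone V := by
  have hRK : Rᵀ * Kz = -(1 / (2 * lmin)) • Cᵀ := by
    rw [hKz, Matrix.mul_smul, transpose_nonsing_inv,
      mul_nonsing_inv_cancel_left _ _ (isUnit_det_transpose R hR)]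
  exact stmt19_general hlmin hRK h1 h3 hΔ hx heq hV
end
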